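/- arXiv:2601.18715 — 4 statements merged into one kernel-verified Lean document; each statement's English description precedes it below -/
import Mathlib

section
/- Let S be a finite nonempty set of positive integers with maximum element max S, and let v_S be the sink-subtraction nim-value function of S. Then there exist a natural number N and a positive integer p with p ≤ (|S| + 1)^(max S) and N ≤ max S + (|S| + 1)^(max S) such that v_S(x + p) = v_S(x) for every x ≥ N. -/
/-- The minimum excludant of a finite set of naturals. -/
noncomputable def mex (A : Finset ℕ) : ℕ := sInf {n : ℕ | n ∉ A}

/-- The sink-subtraction nim-value function: `sinkVal S 0 = 0`, and for `x ≥ 1`,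
`sinkVal S x = mex { sinkVal S (x ∸ s) : s ∈ S }` (when every `s ∈ S` is positive,
since `(x+1) - s = x - (s-1)` in truncated subtraction). -/
noncomputable def sinkVal (S : Finset ℕ) : ℕ → ℕ
  | 0 => 0
  | x + 1 => mex (S.image fun s => sinkVal S (x - (s - 1)))
termination_by x => x
decreasing_by omega

theorem mex_le_card_aux (A : Finset ℕ) : mex A ≤ A.card := by
  by_contra h
  push Not at h
  have hsub : Finset.range (A.card + 1) ⊆ A := by
    intro n hn
    by_contra hA
    have : mex A ≤ n := Nat.sInf_le hA
    have := Finset.mem_range.1 hn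
    omega
  have := Finset.card_le_card hsub
  simp at this

theorem sinkVal_le_aux (S : Finset ℕ) (x : ℕ) : sinkVal S x ≤ S.card := by
  cases x with
  | zero => simp [sinkVal]
  | succ x =>
    rw [sinkVal]
    exact (mex_le_card_aux _).trans Finset.card_image_le

theorem sinkVal_rec_aux (S : Finset ℕ) (hpos : ∀ s ∈ S, 0 < s) (x : ℕ) (hx : 0 < x) :
    sinkVal S x = mex (S.image fun s => sinkVal S (x - s)) := by
  obtain ⟨y, rfl⟩ : ∃ y, x = y + 1 := ⟨x - 1, by omega⟩
  rw [sinkVal]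
  congr 1
  apply Finset.image_congr
  intro s hs
  have := hpos s hs
  have e : y - (s - 1) = y + 1 - s := by omega
  simp only [e]

theorem stmt1 (S : Finset ℕ) (hne : S.Nonempty) (hpos : ∀ s ∈ S, 0 < s) :
    ∃ (N p : ℕ), 0 < p ∧ p ≤ (S.card + 1) ^ (S.max' hne) ∧
      N ≤ S.max' hne + (S.card + 1) ^ (S.max' hne) ∧
      ∀ x : ℕ, N ≤ x → sinkVal S (x + p) = sinkVal S x := by
  set M := S.max' hne with hM
  have hle : ∀ s ∈ S, s ≤ M := fun s hs => S.le_max' s hs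
  have hM0 : 0 < M := hpos _ (S.max'_mem hne)
  let w : Fin ((S.card + 1) ^ M + 1) → (Fin M → Fin (S.card + 1)) :=
    fun i j => ⟨sinkVal S (i + j), Nat.lt_succ_of_le (sinkVal_le_aux S _)⟩
  obtain ⟨a, b, hab, hw⟩ := Fintype.exists_ne_map_eq_of_card_lt w (by simp)
  have key : ∀ i j : Fin ((S.card + 1) ^ M + 1), i < j → w i = w j →
      ∃ (N p : ℕ), 0 < p ∧ p ≤ (S.card + 1) ^ M ∧ N ≤ M + (S.card + 1) ^ M ∧
      ∀ x : ℕ, N ≤ x → sinkVal S (x + p) = sinkVal S x := by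
    intro i j hij hwij
    have hi := i.isLt
    have hj := j.isLt
    have hij' : (i : ℕ) < j := hij
    refine ⟨i, j - i, by omega, by omega, by omega, ?_⟩
    intro x
    induction x using Nat.strong_induction_on with
    | _ x ih =>
      intro hx
      by_cases hxM : x < i + M
      · have h1 := congrArg Fin.val (congrFun hwij ⟨x - i, by omega⟩)
        simp only [w] at h1
        have e1 : (i : ℕ) + (x - i) = x := by omega
        have e2 : (j : ℕ) + (x - i) = x + (j - i) := by omega
        rw [e1, e2] at h1
        exact h1.symm
      · rw [sinkVal_rec_aux S hpos x (by omega), sinkVal_rec_aux S hpos (x + _) (by omega)]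
        congr 1
        apply Finset.image_congr
        intro s hs
        have h0 := hpos s hs
        have h1 := hle s hs
        have e : x + ((j : ℕ) - i) - s = (x - s) + (j - i) := by omega
        simp only [e]
        exact ih (x - s) (by omega) (by omega)
  rcases lt_or_gt_of_ne hab with h | h
  · exact key a b h hw
  · exact key b a h hw.symm
end

section
/- Let m and δ be positive integers, let S = {m, m+δ, 2m+δ}, and let d = δ mod 2m. If d ≤ m, then for every x ≥ 1, v_S(x + 3m + 2δ − d) = v_S(x); that is, the nim-sequence of S is purely periodic with period 3m + 2δ − d. -/
theorem mex_eq_of (A : Finset ℕ) (k : ℕ) (h1 : k ∉ A) (h2 : ∀ j < k, j ∈ A) : mex A = k := by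
  unfold mex
  apply le_antisymm
  · exact Nat.sInf_le h1
  · by_contra hlt
    push Not at hlt
    have hmem : sInf {n : ℕ | n ∉ A} ∈ {n : ℕ | n ∉ A} := Nat.sInf_mem ⟨k, h1⟩
    exact hmem (h2 _ hlt)

theorem sinkVal_rec (m δ : ℕ) (hm : 0 < m) (x k : ℕ) (a b c : ℕ)
    (ha : sinkVal {m, m + δ, 2 * m + δ} (x + 1 - m) = a)
    (hb : sinkVal {m, m + δ, 2 * m + δ} (x + 1 - (m + δ)) = b)
    (hc : sinkVal {m, m + δ, 2 * m + δ} (x + 1 - (2 * m + δ)) = c)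
    (h1 : k ≠ a ∧ k ≠ b ∧ k ≠ c)
    (h2 : ∀ j < k, j = a ∨ j = b ∨ j = c) :
    sinkVal {m, m + δ, 2 * m + δ} (x + 1) = k := by
  rw [sinkVal]
  have e1 : x - (m - 1) = x + 1 - m := by omega
  have e2 : x - (m + δ - 1) = x + 1 - (m + δ) := by omega
  have e3 : x - (2 * m + δ - 1) = x + 1 - (2 * m + δ) := by omega
  apply mex_eq_of
  · simp only [Finset.image_insert, Finset.image_singleton, Finset.mem_insert,
      Finset.mem_singleton, e1, e2, e3, ha, hb, hc]
    tauto
  · intro j hj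
    simp only [Finset.image_insert, Finset.image_singleton, Finset.mem_insert,
      Finset.mem_singleton, e1, e2, e3, ha, hb, hc]
    exact h2 j hj

/-- Parity of the block of length `m` containing `t`. -/
def par (m t : ℕ) : ℕ := (t / m) % 2

theorem par_lt (m t : ℕ) : par m t < 2 := Nat.mod_lt _ (by norm_num)

theorem par_add (m t : ℕ) (hm : 0 < m) : par m (t + m) = 1 - par m t := by
  unfold par
  rw [Nat.add_div_right _ hm]
  omega

theorem par_sub (m t : ℕ) (hm : 0 < m) (h : m ≤ t) : par m (t - m) = 1 - par m t := by
  obtain ⟨s, rfl⟩ := Nat.exists_eq_add_of_le' h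
  have := par_lt m s
  rw [par_add m s hm, Nat.add_sub_cancel]
  omega

theorem par_small (m t : ℕ) (h : t < m) : par m t = 0 := by
  unfold par
  rw [Nat.div_eq_of_lt h]

theorem par_addQ (m q t : ℕ) (hm : 0 < m) : par m (t + 2 * m * q) = par m t := by
  unfold par
  rw [show t + 2 * m * q = t + m * (2 * q) by ring, Nat.add_mul_div_left _ _ hm]
  omega

/-- The claimed values over one period, `L = 2m(q+1)`. -/
def per (m q d y : ℕ) : ℕ :=
  if y < 2 * m + 2 * m * q then 1 + par m y else 3 * par m (y - d)

theorem per_lo (m q d y : ℕ) (h : y < 2 * m + 2 * m * q) : per m q d y = 1 + par m y := by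
  simp [per, h]

theorem per_hi (m q d y : ℕ) (h : 2 * m + 2 * m * q ≤ y) :
    per m q d y = 3 * par m (y - d) := by
  simp [per, h]

theorem sinkVal_nonpos (S : Finset ℕ) (x : ℕ) (h : x = 0) : sinkVal S x = 0 := by
  subst h
  rw [sinkVal]

theorem main_aux (m q d : ℕ) (hm : 0 < m) (hdm : d ≤ m) (x : ℕ) :
    ∀ n y, y < 3 * m + 2 * (2 * m * q) + d → x = n * (3 * m + 2 * (2 * m * q) + d) + y →
      sinkVal {m, m + (2 * m * q + d), 2 * m + (2 * m * q + d)} (x + 1) = per m q d y := by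
  induction x using Nat.strong_induction_on with
  | _ x ih =>
  intro n y hy hx
  have hQ : ∀ t, par m (t + 2 * m * q) = par m t := fun t => par_addQ m q t hm
  have hP : ∀ t, m ≤ t → par m (t - m) = 1 - par m t := fun t => par_sub m t hm
  have hlo := per_lo m q d
  have hhi := per_hi m q d
  have hlt := par_lt m
  have hsm := par_small m
  generalize hQQ : 2 * m * q = Q at *
  generalize hv : sinkVal {m, m + (Q + d), 2 * m + (Q + d)} = v at *
  have hv0 : ∀ t, t = 0 → v t = 0 := by
    intro t ht; rw [← hv]; exact sinkVal_nonpos _ _ ht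
  -- the current period
  have cur : ∀ z t, z < y → t = n * (3 * m + 2 * Q + d) + z + 1 → v t = per m q d z := by
    intro z t hz ht
    rw [ht]
    exact ih _ (by omega) n z (by omega) rfl
  -- the previous period
  have prev : ∀ z t, z < 3 * m + 2 * Q + d → 1 ≤ n →
      t + (3 * m + 2 * Q + d) = n * (3 * m + 2 * Q + d) + z + 1 → v t = per m q d z := by
    intro z t hz hn ht
    obtain ⟨n', rfl⟩ := Nat.exists_eq_add_of_le' hn
    rw [Nat.add_mul, Nat.one_mul] at ht hx
    rw [show t = n' * (3 * m + 2 * Q + d) + z + 1 by omega]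
    exact ih _ (by omega) n' z hz rfl
  have fin : ∀ k a b c, v (x + 1 - m) = a → v (x + 1 - (m + (Q + d))) = b →
      v (x + 1 - (2 * m + (Q + d))) = c → (k ≠ a ∧ k ≠ b ∧ k ≠ c) →
      (∀ j < k, j = a ∨ j = b ∨ j = c) → v (x + 1) = k := by
    intro k a b c ha hb hc h1 h2
    rw [← hv] at ha hb hc ⊢
    exact sinkVal_rec m (Q + d) hm x k a b c ha hb hc h1 h2
  have hn0 : n = 0 → n * (3 * m + 2 * Q + d) = 0 := by rintro rfl; simp
  generalize hN : n * (3 * m + 2 * Q + d) = N at *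
  have hly := hlt y
  have hlyd := hlt (y - d)
  have hQs : ∀ t, Q ≤ t → par m (t - Q) = par m t := by
    intro t ht
    have := hQ (t - Q)
    rw [Nat.sub_add_cancel ht] at this
    exact this.symm
  -- last block of a period has value zero
  have hlast : ∀ z, 2 * m + 2 * Q + d ≤ z → z < 3 * m + 2 * Q + d → per m q d z = 0 := by
    intro z h1 h2
    rw [hhi z (by omega)]
    have a1 := hQs (z - d) (by omega)
    have a2 := hQs (z - d - Q) (by omega)
    have a3 := hP (z - d - Q - Q) (by omega)
    have a4 := hP (z - d - Q - Q - m) (by omega)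
    have a5 := hsm (z - d - Q - Q - m - m) (by omega)
    have := hlt (z - d)
    omega
  by_cases c1 : y < m
  · -- value 1
    have e := hsm y c1
    rw [hlo y (by omega), e]
    have ha : v (x + 1 - m) = 0 := by
      rcases Nat.eq_zero_or_pos n with h0 | h0
      · have := hn0 h0
        exact hv0 _ (by omega)
      · rw [prev (3 * m + 2 * Q + d + y - m) _ (by omega) h0 (by
          have : 3 * m + 2 * Q + d ≤ N := hN ▸ Nat.le_mul_of_pos_left _ h0
          omega)]
        exact hlast _ (by omega) (by omega)
    rcases Nat.eq_zero_or_pos n with h0 | h0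
    · have := hn0 h0
      exact fin _ _ _ _ ha (hv0 _ (by omega)) (hv0 _ (by omega)) (by omega) (by omega)
    · have hNP : 3 * m + 2 * Q + d ≤ N := hN ▸ Nat.le_mul_of_pos_left _ h0
      have hb := prev (y + 2 * m + Q) (x + 1 - (m + (Q + d))) (by omega) h0 (by omega)
      have hc := prev (y + m + Q) (x + 1 - (2 * m + (Q + d))) (by omega) h0 (by omega)
      rw [hhi _ (by omega)] at hb
      rw [hlo _ (by omega), hQ] at hc
      have e2 := hP (y + m) (by omega)
      have e3 := hlt (y + m)
      rw [Nat.add_sub_cancel] at e2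
      exact fin _ _ _ _ ha hb hc (by omega) (by omega)
  by_cases c2 : y < 2 * m + Q
  · rw [hlo y c2]
    have ha := cur (y - m) (x + 1 - m) (by omega) (by omega)
    rw [hlo _ (by omega), hP y (by omega)] at ha
    by_cases c3 : y < m + Q + d
    · rcases Nat.eq_zero_or_pos n with h0 | h0
      · have := hn0 h0
        exact fin _ _ _ _ ha (hv0 _ (by omega)) (hv0 _ (by omega)) (by omega) (by omega)
      · have hNP : 3 * m + 2 * Q + d ≤ N := hN ▸ Nat.le_mul_of_pos_left _ h0
        have hb := prev (y + 2 * m + Q) (x + 1 - (m + (Q + d))) (by omega) h0 (by omega)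
        have hc := prev (y + m + Q) (x + 1 - (2 * m + (Q + d))) (by omega) h0 (by omega)
        rw [hhi _ (by omega)] at hb hc
        have e2 := hP (y + 2 * m + Q - d) (by omega)
        rw [show y + 2 * m + Q - d - m = y + m + Q - d by omega] at e2
        have e3 := hlt (y + 2 * m + Q - d)
        exact fin _ _ _ _ ha hb hc (by omega) (by omega)
    · have hb := cur (y - (m + Q + d)) (x + 1 - (m + (Q + d))) (by omega) (by omega)
      rw [hlo _ (by omega), hsm _ (by omega)] at hb
      have e1 := hQs y (by omega)
      have e2 := hP (y - Q) (by omega)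
      have e3 := hsm (y - Q - m) (by omega)
      rcases Nat.eq_zero_or_pos n with h0 | h0
      · have := hn0 h0
        exact fin _ _ _ _ ha hb (hv0 _ (by omega)) (by omega) (by omega)
      · have hNP : 3 * m + 2 * Q + d ≤ N := hN ▸ Nat.le_mul_of_pos_left _ h0
        have hc := prev (y + m + Q) (x + 1 - (2 * m + (Q + d))) (by omega) h0 (by omega)
        rw [hhi _ (by omega)] at hc
        have f1 := hQs (y + m + Q - d) (by omega)
        have f2 := hQs (y + m + Q - d - Q) (by omega)
        have f3 := hP (y + m + Q - d - Q - Q) (by omega)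
        have f4 := hP (y + m + Q - d - Q - Q - m) (by omega)
        have f5 := hsm (y + m + Q - d - Q - Q - m - m) (by omega)
        have f6 := hlt (y + m + Q - d)
        exact fin _ _ _ _ ha hb hc (by omega) (by omega)
  -- second half of the period
  rw [hhi y (by omega)]
  have ha := cur (y - m) (x + 1 - m) (by omega) (by omega)
  have hb := cur (y - d - Q - m) (x + 1 - (m + (Q + d))) (by omega) (by omega)
  rw [hlo _ (by omega), hP _ (by omega), hQs _ (by omega)] at hb
  by_cases c4 : y < 2 * m + Q + d
  · rw [hlo _ (by omega), hP _ (by omega)] at ha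
    have e1 := hQs y (by omega)
    have e2 := hP (y - Q) (by omega)
    have e3 := hP (y - Q - m) (by omega)
    have e4 := hsm (y - Q - m - m) (by omega)
    have g1 := hQs (y - d) (by omega)
    have g2 := hP (y - d - Q) (by omega)
    have g3 := hsm (y - d - Q - m) (by omega)
    have hc : v (x + 1 - (2 * m + (Q + d))) = 0 := by
      rcases Nat.eq_zero_or_pos n with h0 | h0
      · have := hn0 h0
        exact hv0 _ (by omega)
      · have hNP : 3 * m + 2 * Q + d ≤ N := hN ▸ Nat.le_mul_of_pos_left _ h0
        rw [prev (y + m + Q) (x + 1 - (2 * m + (Q + d))) (by omega) h0 (by omega)]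
        exact hlast _ (by omega) (by omega)
    exact fin _ _ _ _ ha hb hc (by omega) (by omega)
  · have hc := cur (y - d - Q - m - m) (x + 1 - (2 * m + (Q + d))) (by omega) (by omega)
    rw [hlo _ (by omega), hP _ (by omega), hP _ (by omega), hQs _ (by omega)] at hc
    by_cases c5 : y < 3 * m + Q
    · rw [hlo _ (by omega), hP _ (by omega)] at ha
      have g1 := hQs (y - d) (by omega)
      have g2 := hP (y - d - Q) (by omega)
      have g3 := hP (y - d - Q - m) (by omega)
      have g4 := hsm (y - d - Q - m - m) (by omega)
      exact fin _ _ _ _ ha hb hc (by omega) (by omega)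
    · rw [hhi _ (by omega), show y - m - d = y - d - m by omega, hP _ (by omega)] at ha
      exact fin _ _ _ _ ha hb hc (by omega) (by omega)

theorem stmt5 (m δ : ℕ) (hm : 0 < m) (hδ : 0 < δ)
    (S : Finset ℕ) (hS : S = {m, m + δ, 2 * m + δ})
    (d : ℕ) (hd : d = δ % (2 * m)) (hdm : d ≤ m) :
    ∀ x : ℕ, 1 ≤ x → sinkVal S (x + (3 * m + 2 * δ - d)) = sinkVal S x := by
  intro x hx
  obtain ⟨x, rfl⟩ := Nat.exists_eq_add_of_le' hx
  obtain ⟨q, hq⟩ : ∃ q, δ = 2 * m * q + d :=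
    ⟨δ / (2 * m), by rw [hd]; exact (Nat.div_add_mod _ _).symm⟩
  clear hd
  subst hq hS
  rw [show 3 * m + 2 * (2 * m * q + d) - d = 3 * m + 2 * (2 * m * q) + d by omega]
  generalize hP : 3 * m + 2 * (2 * m * q) + d = P
  have hdm' := Nat.div_add_mod x P
  have hlt : x % P < P := Nat.mod_lt _ (by omega)
  have h1 := main_aux m q d hm hdm x (x / P) (x % P) (by omega)
    (by rw [hP, Nat.mul_comm]; exact hdm'.symm)
  have h2 := main_aux m q d hm hdm (x + P) (x / P + 1) (x % P) (by omega)
    (by rw [hP, Nat.add_mul, Nat.mul_comm]; omega)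
  rw [h1, show x + 1 + P = x + P + 1 by omega, h2]
end

section
/- Let m and k be integers with 1 ≤ k < m, let δ = m + k, and let S = {m, m+δ, 2m+δ} = {m, 2m+k, 3m+k}. Then gcd(m,k) divides m·(4m + 3k), and for every x ≥ 1, v_S(x + m·(4m + 3k)/gcd(m,k)) = v_S(x); that is, the nim-sequence of S is purely periodic with period m·(4m + 3k)/gcd(m,k). -/
/-- The four cases of the mex recurrence, for a function on the integers. -/
def SinkRec (m k : ℤ) (G : ℤ → ℕ) : Prop :=
  ∀ y : ℤ, 0 ≤ y → ∀ a b c : ℕ, G (y - m) = a → G (y - 2 * m - k) = b → G (y - 3 * m - k) = c →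
    ((a ≠ 0 ∧ b ≠ 0 ∧ c ≠ 0) → G y = 0) ∧
    ((a ≠ 1 ∧ b ≠ 1 ∧ c ≠ 1 ∧ (a = 0 ∨ b = 0 ∨ c = 0)) → G y = 1) ∧
    ((a ≠ 2 ∧ b ≠ 2 ∧ c ≠ 2 ∧ (a = 0 ∨ b = 0 ∨ c = 0) ∧ (a = 1 ∨ b = 1 ∨ c = 1)) → G y = 2) ∧
    ((a ≠ 3 ∧ b ≠ 3 ∧ c ≠ 3 ∧ (a = 0 ∨ b = 0 ∨ c = 0) ∧ (a = 1 ∨ b = 1 ∨ c = 1) ∧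
      (a = 2 ∨ b = 2 ∨ c = 2)) → G y = 3)

/-- The state before a round starting at `Y` with parameter `a`. -/
structure RoundInv (m k : ℤ) (G : ℤ → ℕ) (Y a : ℤ) : Prop where
  hY : 0 ≤ Y
  ha : 0 ≤ a
  ham : a < m
  j1 : ∀ y, Y - 3 * m - k ≤ y → y < Y - 2 * m - k - a → G y ≠ 1
  j2 : ∀ y, Y - 2 * m - k - a ≤ y → y < Y - 2 * m - k → G y ≠ 0
  j3 : ∀ y, Y - 2 * m - k ≤ y → y < Y - m - k - a → G y = 0 ∨ G y = 3
  j3' : ∀ y, Y - 2 * m - k ≤ y → y < Y - 2 * m - a → G y = 0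
  j4 : ∀ y, Y - m - k - a ≤ y → y < Y - m - k → G y = 2
  j5 : ∀ y, Y - m - k ≤ y → y < Y - a → G y = 0 ∨ G y = 3
  j5' : ∀ y, Y - m - k ≤ y → Y - m - a ≤ y → y < Y - a → G y = 0
  j6 : ∀ y, Y - a ≤ y → y < Y → G y = 3

set_option maxHeartbeats 8000000 in
theorem step_non (m k : ℤ) (hk : 1 ≤ k) (hkm : k < m) (G : ℤ → ℕ) (H : SinkRec m k G)
    (Y a : ℤ) (I : RoundInv m k G Y a) (hw : a + k < m) :
    RoundInv m k G (Y + (4 * m + 2 * k)) (a + k) ∧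
    (∀ y, Y + (0) ≤ y → y < Y + (m-a) → G y = 1) ∧
    (∀ y, Y + (m-a) ≤ y → y < Y + (m) → G y = 0) ∧
    (∀ y, Y + (m) ≤ y → y < Y + (2*m-a) → G y = 2) ∧
    (∀ y, Y + (2*m-a) ≤ y → y < Y + (2*m+k) → G y = 1) ∧
    (∀ y, Y + (2*m+k) ≤ y → y < Y + (3*m-a) → G y = 3) ∧
    (∀ y, Y + (3*m-a) ≤ y → y < Y + (3*m+k) → G y = 2) := by
  obtain ⟨hY, ha, ham, j1, j2, j3, j3', j4, j5, j5', j6⟩ := I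
  have s1 : ∀ y, Y + (0) ≤ y → y < Y + (m-a) → G y = 1 := by
    intro y hlo hhi
    have R := H y (by omega) _ _ _ rfl rfl rfl
    clear H
    refine R.2.1 ?_
    clear R
    grind (splits := 40)
  have s2 : ∀ y, Y + (m-a) ≤ y → y < Y + (m) → G y = 0 := by
    intro y hlo hhi
    have R := H y (by omega) _ _ _ rfl rfl rfl
    clear H
    refine R.1 ?_
    clear R
    grind (splits := 40)
  have s3 : ∀ y, Y + (m) ≤ y → y < Y + (2*m-a) → G y = 2 := by
    intro y hlo hhi
    have R := H y (by omega) _ _ _ rfl rfl rfl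
    clear H
    refine R.2.2.1 ?_
    clear R
    grind (splits := 40)
  have s4 : ∀ y, Y + (2*m-a) ≤ y → y < Y + (2*m+k) → G y = 1 := by
    intro y hlo hhi
    have R := H y (by omega) _ _ _ rfl rfl rfl
    clear H
    refine R.2.1 ?_
    clear R
    grind (splits := 40)
  have s5 : ∀ y, Y + (2*m+k) ≤ y → y < Y + (3*m-a) → G y = 3 := by
    intro y hlo hhi
    have R := H y (by omega) _ _ _ rfl rfl rfl
    clear H
    refine R.2.2.2 ?_
    clear R
    grind (splits := 40)
  have s6 : ∀ y, Y + (3*m-a) ≤ y → y < Y + (3*m+k) → G y = 2 := by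
    intro y hlo hhi
    have R := H y (by omega) _ _ _ rfl rfl rfl
    clear H
    refine R.2.2.1 ?_
    clear R
    grind (splits := 40)
  have s7 : ∀ y, Y + (3*m+k) ≤ y → y < Y + (4*m+k-a) → G y = 0 := by
    intro y hlo hhi
    have R := H y (by omega) _ _ _ rfl rfl rfl
    clear H
    refine R.1 ?_
    clear R
    grind (splits := 40)
  have s8 : ∀ y, Y + (4*m+k-a) ≤ y → y < Y + (4*m+2*k) → G y = 3 := by
    intro y hlo hhi
    have R := H y (by omega) _ _ _ rfl rfl rfl
    clear H
    refine R.2.2.2 ?_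
    clear R
    grind (splits := 40)
  refine ⟨⟨by omega, by omega, by omega, ?_, ?_, ?_, ?_, ?_, ?_, ?_, ?_⟩, s1, s2, s3, s4, s5, s6⟩
  all_goals
    clear j1 j2 j3 j3' j4 j5 j5' j6 H
    intro y
    grind (splits := 40)

set_option maxHeartbeats 8000000 in
theorem step_wrap (m k : ℤ) (hk : 1 ≤ k) (hkm : k < m) (G : ℤ → ℕ) (H : SinkRec m k G)
    (Y a : ℤ) (I : RoundInv m k G Y a) (hw : m ≤ a + k) :
    RoundInv m k G (Y + (5 * m + 2 * k)) (a + k - m) ∧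
    (∀ y, Y + (0) ≤ y → y < Y + (m-a) → G y = 1) ∧
    (∀ y, Y + (m-a) ≤ y → y < Y + (m) → G y = 0) ∧
    (∀ y, Y + (m) ≤ y → y < Y + (2*m-a) → G y = 2) ∧
    (∀ y, Y + (2*m-a) ≤ y → y < Y + (3*m-a) → G y = 1) ∧
    (∀ y, Y + (3*m-a) ≤ y → y < Y + (4*m-a) → G y = 2) ∧
    (∀ y, Y + (4*m-a) ≤ y → y < Y + (3*m+k) → G y = 1) := by
  obtain ⟨hY, ha, ham, j1, j2, j3, j3', j4, j5, j5', j6⟩ := I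
  have s1 : ∀ y, Y + (0) ≤ y → y < Y + (m-a) → G y = 1 := by
    intro y hlo hhi
    have R := H y (by omega) _ _ _ rfl rfl rfl
    clear H
    refine R.2.1 ?_
    clear R
    grind (splits := 40)
  have s2 : ∀ y, Y + (m-a) ≤ y → y < Y + (m) → G y = 0 := by
    intro y hlo hhi
    have R := H y (by omega) _ _ _ rfl rfl rfl
    clear H
    refine R.1 ?_
    clear R
    grind (splits := 40)
  have s3 : ∀ y, Y + (m) ≤ y → y < Y + (2*m-a) → G y = 2 := by
    intro y hlo hhi
    have R := H y (by omega) _ _ _ rfl rfl rfl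
    clear H
    refine R.2.2.1 ?_
    clear R
    grind (splits := 40)
  have s4 : ∀ y, Y + (2*m-a) ≤ y → y < Y + (3*m-a) → G y = 1 := by
    intro y hlo hhi
    have R := H y (by omega) _ _ _ rfl rfl rfl
    clear H
    refine R.2.1 ?_
    clear R
    grind (splits := 40)
  have s5 : ∀ y, Y + (3*m-a) ≤ y → y < Y + (4*m-a) → G y = 2 := by
    intro y hlo hhi
    have R := H y (by omega) _ _ _ rfl rfl rfl
    clear H
    refine R.2.2.1 ?_
    clear R
    grind (splits := 40)
  have s6 : ∀ y, Y + (4*m-a) ≤ y → y < Y + (3*m+k) → G y = 1 := by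
    intro y hlo hhi
    have R := H y (by omega) _ _ _ rfl rfl rfl
    clear H
    refine R.2.1 ?_
    clear R
    grind (splits := 40)
  have s7 : ∀ y, Y + (3*m+k) ≤ y → y < Y + (4*m+k-a) → G y = 0 := by
    intro y hlo hhi
    have R := H y (by omega) _ _ _ rfl rfl rfl
    clear H
    refine R.1 ?_
    clear R
    grind (splits := 40)
  have s8 : ∀ y, Y + (4*m+k-a) ≤ y → y < Y + (5*m-a) → G y = 3 := by
    intro y hlo hhi
    have R := H y (by omega) _ _ _ rfl rfl rfl
    clear H
    refine R.2.2.2 ?_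
    clear R
    grind (splits := 40)
  have s9 : ∀ y, Y + (5*m-a) ≤ y → y < Y + (4*m+k) → G y = 2 := by
    intro y hlo hhi
    have R := H y (by omega) _ _ _ rfl rfl rfl
    clear H
    refine R.2.2.1 ?_
    clear R
    grind (splits := 40)
  have s10 : ∀ y, Y + (4*m+k) ≤ y → y < Y + (5*m+k-a) → G y = 3 := by
    intro y hlo hhi
    have R := H y (by omega) _ _ _ rfl rfl rfl
    clear H
    refine R.2.2.2 ?_
    clear R
    grind (splits := 40)
  have s11 : ∀ y, Y + (5*m+k-a) ≤ y → y < Y + (6*m+k-a) → G y = 0 := by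
    intro y hlo hhi
    have R := H y (by omega) _ _ _ rfl rfl rfl
    clear H
    refine R.1 ?_
    clear R
    grind (splits := 40)
  have s12 : ∀ y, Y + (6*m+k-a) ≤ y → y < Y + (5*m+2*k) → G y = 3 := by
    intro y hlo hhi
    have R := H y (by omega) _ _ _ rfl rfl rfl
    clear H
    refine R.2.2.2 ?_
    clear R
    grind (splits := 40)
  refine ⟨⟨by omega, by omega, by omega, ?_, ?_, ?_, ?_, ?_, ?_, ?_, ?_⟩, s1, s2, s3, s4, s5, s6⟩
  all_goals
    clear j1 j2 j3 j3' j4 j5 j5' j6 H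
    intro y
    grind (splits := 40)

theorem inv_eq (m k : ℤ) (hk : 1 ≤ k) (hkm : k < m) (G : ℤ → ℕ) (H : SinkRec m k G)
    (Y Z a : ℤ) (I : RoundInv m k G Y a) (J : RoundInv m k G Z a) (i : ℤ) (h0 : 0 ≤ i)
    (h1 : i < 3 * m + k) : G (Y + i) = G (Z + i) := by
  rcases lt_or_ge (a + k) m with hw | hw
  · obtain ⟨-, a1, a2, a3, a4, a5, a6⟩ := step_non m k hk hkm G H Y a I hw
    obtain ⟨-, b1, b2, b3, b4, b5, b6⟩ := step_non m k hk hkm G H Z a J hw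
    clear H I J
    grind (splits := 40)
  · obtain ⟨-, a1, a2, a3, a4, a5, a6⟩ := step_wrap m k hk hkm G H Y a I hw
    obtain ⟨-, b1, b2, b3, b4, b5, b6⟩ := step_wrap m k hk hkm G H Z a J hw
    clear H I J
    grind (splits := 40)

theorem mex_eq (A : Finset ℕ) (n : ℕ) (h : n ∉ A) (h' : ∀ i < n, i ∈ A) : mex A = n := by
  unfold mex
  apply le_antisymm
  · exact Nat.sInf_le h
  · apply le_csInf ⟨n, h⟩
    intro b hb
    by_contra hlt
    exact hb (h' b (by omega))

theorem inv_all (m k : ℕ) (hk : 1 ≤ k) (hkm : k < m) (G : ℤ → ℕ) (H : SinkRec m k G)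
    (I : RoundInv m k G 0 0) (n : ℕ) :
    ∀ q a : ℕ, a < m → n * k = q * m + a → RoundInv m k G ((n * (4 * m + 2 * k) + q * m : ℕ) : ℤ) a := by
  induction n with
  | zero =>
    intro q a ha h
    have h1 : q * m = 0 := by omega
    have h2 : a = 0 := by omega
    subst h2
    rw [h1]
    simpa using I
  | succ n ih =>
    intro q a ha h
    have h3 : n * k + k = q * m + a := by rw [← h]; ring
    rcases lt_or_ge a k with hak | hak
    · have hq : 1 ≤ q := by
        rcases Nat.eq_zero_or_pos q with h0 | h0
        · subst h0; omega
        · exact h0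
      obtain ⟨q', rfl⟩ : ∃ q', q = q' + 1 := ⟨q - 1, by omega⟩
      have h4 : (q' + 1) * m = q' * m + m := by ring
      have := ih q' (a + m - k) (by omega) (by omega)
      have := (step_wrap m k (by omega) (by omega) G H _ _ this (by omega)).1
      convert this using 1
      · push_cast; ring
      · omega
    · have := ih q (a - k) (by omega) (by omega)
      have := (step_non m k (by omega) (by omega) G H _ _ this (by omega)).1
      convert this using 1
      · push_cast; ring
      · omega

theorem stmt7 (m k : ℕ) (hk : 1 ≤ k) (hkm : k < m)
    (S : Finset ℕ) (hS : S = {m, 2 * m + k, 3 * m + k}) :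
    Nat.gcd m k ∣ m * (4 * m + 3 * k) ∧
      ∀ x : ℕ, 1 ≤ x →
        sinkVal S (x + m * (4 * m + 3 * k) / Nat.gcd m k) = sinkVal S x := by
  refine ⟨(Nat.gcd_dvd_left m k).mul_right _, ?_⟩
  obtain ⟨G, hG⟩ : ∃ G : ℤ → ℕ, ∀ j, G j = sinkVal S (j + 1).toNat := ⟨_, fun _ => rfl⟩
  have hneg : ∀ j : ℤ, j < 0 → G j = 0 := by
    intro j hj
    have : (j + 1).toNat = 0 := by omega
    rw [hG, this, sinkVal]
  have hmex : ∀ y : ℤ, 0 ≤ y →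
      G y = mex {G (y - m), G (y - 2 * m - k), G (y - 3 * m - k)} := by
    intro y hy
    obtain ⟨n, rfl⟩ := Int.eq_ofNat_of_zero_le hy
    have e : ((n : ℤ) + 1).toNat = n + 1 := by omega
    have e1 : ((n : ℤ) - m + 1).toNat = n - (m - 1) := by omega
    have e2 : ((n : ℤ) - 2 * m - k + 1).toNat = n - (2 * m + k - 1) := by omega
    have e3 : ((n : ℤ) - 3 * m - k + 1).toNat = n - (3 * m + k - 1) := by omega
    rw [hG, hG, hG, hG, e, e1, e2, e3, sinkVal]
    congr 1
    rw [hS]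
    simp [Finset.image_insert]
  have H : SinkRec m k G := by
    intro y hy a b c ha hb hc
    have hr := hmex y hy
    rw [ha, hb, hc] at hr
    rw [hr]
    refine ⟨?_, ?_, ?_, ?_⟩
    all_goals
      intro h
      apply mex_eq
      · simp only [Finset.mem_insert, Finset.mem_singleton]
        omega
      · intro i hi
        simp only [Finset.mem_insert, Finset.mem_singleton]
        omega
  have I : RoundInv m k G 0 0 := by
    refine ⟨le_refl _, le_refl _, by omega, ?_, ?_, ?_, ?_, ?_, ?_, ?_, ?_⟩
    all_goals
      intros
      first
        | omega
        | (have := hneg _ (by assumption); omega)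
        | (rename_i y _ _; have := hneg y (by omega); omega)
        | (rename_i y _ _ _; have := hneg y (by omega); omega)
  set g := Nat.gcd m k with hg
  have gpos : 0 < g := Nat.gcd_pos_of_pos_right _ (by omega)
  obtain ⟨m', hm'⟩ : g ∣ m := Nat.gcd_dvd_left m k
  obtain ⟨k', hk'⟩ : g ∣ k := Nat.gcd_dvd_right m k
  have hp : m * (4 * m + 3 * k) / g = m' * (4 * m + 2 * k) + k' * m := by
    apply Nat.div_eq_of_eq_mul_right gpos
    calc m * (4 * m + 3 * k) = m * (4 * m + 2 * k) + k * m := by ring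
      _ = (g * m') * (4 * m + 2 * k) + (g * k') * m := by rw [← hm', ← hk']
      _ = _ := by ring
  have hmk : m' * k = k' * m + 0 := by
    calc m' * k = m' * (g * k') := by rw [← hk']
      _ = k' * (g * m') := by ring
      _ = k' * m + 0 := by rw [← hm', Nat.add_zero]
  have Ip := inv_all m k hk hkm G H I m' k' 0 (by omega) hmk
  rw [← hp] at Ip
  generalize m * (4 * m + 3 * k) / g = p at *
  have key : ∀ n : ℕ, G ((p : ℤ) + n) = G n := by
    intro n
    induction n using Nat.strong_induction_on with
    | _ n ih =>
      rcases lt_or_ge n (3 * m + k) with h | h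
      · have := inv_eq m k (by omega) (by omega) G H p 0 0 (by simpa using Ip) I n (by omega)
          (by omega)
        simpa using this
      · have r1 := ih (n - m) (by omega)
        have r2 := ih (n - (2 * m + k)) (by omega)
        have r3 := ih (n - (3 * m + k)) (by omega)
        have e1 : ((n - m : ℕ) : ℤ) = n - m := by omega
        have e2 : ((n - (2 * m + k) : ℕ) : ℤ) = n - 2 * m - k := by omega
        have e3 : ((n - (3 * m + k) : ℕ) : ℤ) = n - 3 * m - k := by omega
        rw [e1] at r1
        rw [e2] at r2
        rw [e3] at r3
        rw [hmex _ (by omega), hmex n (by omega), ← r1, ← r2, ← r3]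
        have f1 : (p : ℤ) + n - m = p + (n - m) := by ring
        have f2 : (p : ℤ) + n - 2 * m - k = p + (n - 2 * m - k) := by ring
        have f3 : (p : ℤ) + n - 3 * m - k = p + (n - 3 * m - k) := by ring
        rw [f1, f2, f3]
  intro x hx
  have := key (x - 1)
  rw [hG, hG] at this
  have e1 : ((p : ℤ) + (x - 1 : ℕ) + 1).toNat = x + p := by omega
  have e2 : (((x - 1 : ℕ) : ℤ) + 1).toNat = x := by omega
  rwa [e1, e2] at this
end

section
/- Let m and δ be positive integers with d = δ mod 2m satisfying d ≤ m, and let S = {m, m+δ, 2m+δ}. Then for every integer r with 1 ≤ r ≤ d, v_S(2m + δ − d + r) = 3. (This is the factor 3^d of the period, occupying the d positions following position 2m + δ − d.) -/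
theorem mex_eq_of_s9 (A : Finset ℕ) (n : ℕ) (h : n ∉ A) (h' : ∀ k < n, k ∈ A) : mex A = n := by
  unfold mex
  apply le_antisymm
  · exact Nat.sInf_le h
  · by_contra hlt
    push Not at hlt
    exact (Nat.sInf_mem (s := {n : ℕ | n ∉ A}) ⟨n, h⟩) (h' _ hlt)

theorem sinkVal_zero (S : Finset ℕ) : sinkVal S 0 = 0 := by
  rw [sinkVal]

theorem sinkVal_step (m δ x : ℕ) (hm : 0 < m) (hx : 0 < x) :
    sinkVal {m, m + δ, 2 * m + δ} x =
      mex {sinkVal {m, m + δ, 2 * m + δ} (x - m), sinkVal {m, m + δ, 2 * m + δ} (x - (m + δ)),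
        sinkVal {m, m + δ, 2 * m + δ} (x - (2 * m + δ))} := by
  obtain ⟨y, rfl⟩ : ∃ y, x = y + 1 := ⟨x - 1, by omega⟩
  rw [sinkVal]
  simp only [Finset.image_insert, Finset.image_singleton]
  have e1 : y - (m - 1) = y + 1 - m := by omega
  have e2 : y - (m + δ - 1) = y + 1 - (m + δ) := by omega
  have e3 : y - (2 * m + δ - 1) = y + 1 - (2 * m + δ) := by omega
  rw [e1, e2, e3]

theorem sinkVal_low (m δ x a b : ℕ) (hm : 0 < m) (hx : 0 < x) (hle : x ≤ m + δ)
    (ha : sinkVal {m, m + δ, 2 * m + δ} (x - m) = a)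
    (hab : (a = 0 ∧ b = 1) ∨ (a = 1 ∧ b = 2) ∨ (a = 2 ∧ b = 1)) :
    sinkVal {m, m + δ, 2 * m + δ} x = b := by
  rw [sinkVal_step m δ x hm hx, ha, show x - (m + δ) = 0 by omega,
    show x - (2 * m + δ) = 0 by omega, sinkVal_zero]
  rcases hab with ⟨rfl, rfl⟩ | ⟨rfl, rfl⟩ | ⟨rfl, rfl⟩ <;>
  · apply mex_eq_of_s9
    · simp
    · intro k hk
      interval_cases k <;> simp

theorem sinkVal_alt (m δ : ℕ) (hm : 0 < m) (j : ℕ) : ∀ r, 1 ≤ r → r ≤ m →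
    (2 * m * j + r ≤ m + δ → sinkVal {m, m + δ, 2 * m + δ} (2 * m * j + r) = 1) ∧
    (2 * m * j + m + r ≤ m + δ → sinkVal {m, m + δ, 2 * m + δ} (2 * m * j + m + r) = 2) := by
  induction j with
  | zero =>
    intro r h1 h2
    have h : sinkVal {m, m + δ, 2 * m + δ} (2 * m * 0 + r) = 1 := by
      apply sinkVal_low m δ _ 0 1 hm (by omega) (by omega) _ (by simp)
      rw [show 2 * m * 0 + r - m = 0 by omega, sinkVal_zero]
    refine ⟨fun _ => h, fun hle => ?_⟩
    apply sinkVal_low m δ _ 1 2 hm (by omega) hle _ (by simp)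
    rw [show 2 * m * 0 + m + r - m = 2 * m * 0 + r by omega, h]
  | succ j ih =>
    intro r h1 h2
    have e : 2 * m * (j + 1) = 2 * m * j + 2 * m := by ring
    rw [e]
    have h : 2 * m * j + 2 * m + r ≤ m + δ →
        sinkVal {m, m + δ, 2 * m + δ} (2 * m * j + 2 * m + r) = 1 := by
      intro hle
      apply sinkVal_low m δ _ 2 1 hm (by omega) hle _ (by simp)
      rw [show 2 * m * j + 2 * m + r - m = 2 * m * j + m + r by omega]
      exact (ih r h1 h2).2 (by omega)
    refine ⟨h, fun hle => ?_⟩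
    apply sinkVal_low m δ _ 1 2 hm (by omega) hle _ (by simp)
    rw [show 2 * m * j + 2 * m + m + r - m = 2 * m * j + 2 * m + r by omega]
    exact h (by omega)

theorem stmt9 (m δ : ℕ) (hm : 0 < m) (hδ : 0 < δ)
    (S : Finset ℕ) (hS : S = {m, m + δ, 2 * m + δ})
    (d : ℕ) (hd : d = δ % (2 * m)) (hdm : d ≤ m) :
    ∀ r : ℕ, 1 ≤ r → r ≤ d → sinkVal S (2 * m + δ - d + r) = 3 := by
  subst hS
  intro r h1 h2
  have hk : 2 * m * (δ / (2 * m)) + d = δ := by rw [hd]; exact Nat.div_add_mod _ _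
  have hA := (sinkVal_alt m δ hm (δ / (2 * m)) r h1 (by omega)).2 (by omega)
  have hB := (sinkVal_alt m δ hm 0 (m - d + r) (by omega) (by omega)).1 (by omega)
  generalize 2 * m * (δ / (2 * m)) = q at hk hA
  rw [sinkVal_step m δ _ hm (by omega),
    show 2 * m + δ - d + r - m = q + m + r by omega,
    show 2 * m + δ - d + r - (m + δ) = 2 * m * 0 + (m - d + r) by omega,
    show 2 * m + δ - d + r - (2 * m + δ) = 0 by omega, hA, hB, sinkVal_zero]
  apply mex_eq_of_s9
  · simp
  · intro k hk
    interval_cases k <;> simp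
end
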